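/- Let p be a prime number. For any clopen subset Ω of the subspace ℕ_τ \ pℕ of the Golomb space and any x ∈ Ω, there exists n ∈ ℕ such that x + p^nℕ₀ ⊆ Ω. -/

import Mathlib

open TopologicalSpace

/-- The arithmetic progression `a + bℕ₀ = {a + b*n : n ≥ 0}` inside the positive integers. -/
def golombBasic (a b : ℕ) : Set ℕ+ := {x : ℕ+ | ∃ n : ℕ, (x : ℕ) = a + b * n}

/-- The Golomb topology on the positive integers, generated by the arithmetic
progressions `a + bℕ₀` with coprime `a, b ∈ ℕ`. -/
instance golombTopology : TopologicalSpace ℕ+ :=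
  generateFrom {S : Set ℕ+ | ∃ a b : ℕ, 0 < a ∧ 0 < b ∧ Nat.Coprime a b ∧ S = golombBasic a b}

/-- The positive integers not divisible by `p` (the set `ℕ \ pℕ`). -/
abbrev Np (p : ℕ) : Type := {x : ℕ+ // ¬ p ∣ (x : ℕ)}

/-- The `p`-adic topology on `ℕ \ pℕ`, generated by the traces of the sets
`x + p^nℕ₀`, `x, n ∈ ℕ`. -/
def padicTop (p : ℕ) : TopologicalSpace (Np p) :=
  generateFrom {S : Set (Np p) | ∃ x n : ℕ, 0 < x ∧ 0 < n ∧
    S = {y : Np p | ∃ k : ℕ, ((y : ℕ+) : ℕ) = x + p ^ n * k}}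

/-- Closure of a set of positive integers in the `p`-adic topology on `ℕ \ pℕ`,
viewed again as a set of positive integers. -/
def padicClosure (p : ℕ) (A : Set ℕ+) : Set ℕ+ :=
  Subtype.val '' (@closure (Np p) (padicTop p) (Subtype.val ⁻¹' A))

/-- `a^ℕ = {a^k : k ∈ ℕ}`, the set of positive powers of `a`. -/
def powSet (a : ℕ) : Set ℕ+ := {y : ℕ+ | ∃ k : ℕ, 0 < k ∧ (y : ℕ) = a ^ k}

/-- The closure of `a^ℕ` in the `p`-adic topology on `ℕ \ pℕ`. -/
def clPow (p a : ℕ) : Set ℕ+ := padicClosure p (powSet a)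

/-- The family `𝒳_p` of closures of the sets `a^ℕ` for `a ∈ ℕ \ pℕ`, `a ≠ 1`. -/
def XX (p : ℕ) : Set (Set ℕ+) := {X | ∃ a : ℕ, 0 < a ∧ a ≠ 1 ∧ ¬ p ∣ a ∧ X = clPow p a}

/-- The projection `π_n(X)` of a set of positive integers to `ℤ/p^nℤ`. -/
def pin (p n : ℕ) (X : Set ℕ+) : Set (ZMod (p ^ n)) :=
  (fun y : ℕ+ => ((y : ℕ) : ZMod (p ^ n))) '' X

/-- `n(X)`: the least `n ∈ ℕ` with `X = ℕ ∩ π_n⁻¹(π_n(X))` and `|π_n(X)| ≥ max(p,3)`. -/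
noncomputable def nX (p : ℕ) (X : Set ℕ+) : ℕ :=
  sInf {n : ℕ | 0 < n ∧ X = {y : ℕ+ | ((y : ℕ) : ZMod (p ^ n)) ∈ pin p n X} ∧
    max p 3 ≤ (pin p n X).ncard}

/-- `i(X)`: the index of the subgroup `π_{n(X)}(X)` in the group of units of `ℤ/p^{n(X)}ℤ`. -/
noncomputable def iX (p : ℕ) (X : Set ℕ+) : ℕ :=
  Nat.card ((ZMod (p ^ nX p X))ˣ) / (pin p (nX p X) X).ncard

/-!
If `A` is a union of residue classes modulo `u`, then the closure of `x + ucℕ₀` in the subspace `A`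
contains every multiple `z ∈ A` of `c` with `z ≡ x` modulo `u`: a basic neighbourhood `z + dℕ₀` has
`d` coprime to `z`, hence to `c`, so `gcd(uc, d)` divides `u` and the two progressions meet by the
Chinese remainder theorem. Splitting the step `b` of a neighbourhood `x + bℕ₀` into a part dividing
a power of `q` and a part `c` coprime to `q`, one sees that a clopen set containing `x` contains all
multiples of `c` that are congruent to `x` modulo some `q ^ n`.

If `y ≡ x` modulo `q ^ n` were outside the clopen set `Ω`, then `Ωᶜ` would likewise contain all
multiples of some `e` coprime to `q` that are congruent to `y` modulo some `q ^ m`. A positive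
multiple of `c * e` congruent to `y` modulo `q ^ (n + m)` would lie in both `Ω` and `Ωᶜ`.
-/

open Filter Topology

theorem exists_eq_mul_dvd_pow_coprime (q : ℕ) {b : ℕ} (hb : b ≠ 0) :
    ∃ u c n : ℕ, b = u * c ∧ u ∣ q ^ n ∧ q.Coprime c := by
  induction b using induction_on_primes with
  | zero => exact absurd rfl hb
  | one => exact ⟨1, 1, 0, rfl, one_dvd _, q.coprime_one_right⟩
  | prime_mul p b hp ih =>
    obtain ⟨u, c, n, rfl, hu, hc⟩ := ih (right_ne_zero_of_mul hb)
    by_cases hpq : p ∣ q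
    · exact ⟨p * u, c, n + 1, (mul_assoc ..).symm, pow_succ' q n ▸ mul_dvd_mul hpq hu, hc⟩
    · exact ⟨u, p * c, n, mul_left_comm .., hu,
        (hp.coprime_iff_not_dvd.mpr hpq).symm.mul_right hc⟩

section Progressions

variable {a b c d : ℕ} {x : ℕ+}

theorem mem_golombBasic_iff : x ∈ golombBasic a b ↔ a ≤ x ∧ (x : ℕ) ≡ a [MOD b] := by
  constructor
  · rintro ⟨k, hk⟩
    have hle : a ≤ x := hk ▸ Nat.le_add_right _ _
    exact ⟨hle, ((Nat.modEq_iff_exists_eq_add hle).mpr ⟨k, hk⟩).symm⟩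
  · rintro ⟨hle, hmod⟩
    exact (Nat.modEq_iff_exists_eq_add hle).mp hmod.symm

theorem self_mem_golombBasic (x : ℕ+) (b : ℕ) : x ∈ golombBasic x b :=
  ⟨0, rfl⟩

theorem golombBasic_subset_golombBasic (hx : x ∈ golombBasic a b) (hbc : b ∣ c) :
    golombBasic x c ⊆ golombBasic a b := by
  intro y hy
  rw [mem_golombBasic_iff] at hx hy ⊢
  exact ⟨hx.1.trans hy.1, (hy.2.of_dvd hbc).trans hx.2⟩

theorem coprime_of_mem_golombBasic (hab : a.Coprime b) (hx : x ∈ golombBasic a b) :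
    (x : ℕ).Coprime b :=
  (mem_golombBasic_iff.mp hx).2.gcd_eq.trans hab

theorem golombBasic_inter_nonempty (hb : b ≠ 0) (hd : d ≠ 0) (h : a ≡ c [MOD b.gcd d]) :
    (golombBasic a b ∩ golombBasic c d).Nonempty := by
  obtain ⟨k, hka, hkc⟩ := Nat.chineseRemainder' h
  obtain ⟨w, hw, hwk⟩ :=
    frequently_atTop.mp (Nat.frequently_modEq (Nat.lcm_ne_zero hb hd) k) (a + c + 1)
  have hwa : w ≡ a [MOD b] := (hwk.of_dvd (Nat.dvd_lcm_left b d)).trans hka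
  have hwc : w ≡ c [MOD d] := (hwk.of_dvd (Nat.dvd_lcm_right b d)).trans hkc
  exact ⟨⟨w, by lia⟩, mem_golombBasic_iff.mpr ⟨show a ≤ w by lia, hwa⟩,
    mem_golombBasic_iff.mpr ⟨show c ≤ w by lia, hwc⟩⟩

end Progressions

theorem isTopologicalBasis_golombBasic :
    IsTopologicalBasis
      {S : Set ℕ+ | ∃ a b : ℕ, 0 < a ∧ 0 < b ∧ Nat.Coprime a b ∧ S = golombBasic a b} where
  exists_subset_inter := by
    rintro _ ⟨a, b, -, hb, hab, rfl⟩ _ ⟨c, d, -, hd, hcd, rfl⟩ x ⟨hxa, hxc⟩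
    have hcop : (x : ℕ).Coprime (b * d) :=
      (coprime_of_mem_golombBasic hab hxa).mul_right (coprime_of_mem_golombBasic hcd hxc)
    exact ⟨golombBasic x (b * d), ⟨x, b * d, x.pos, Nat.mul_pos hb hd, hcop, rfl⟩,
      self_mem_golombBasic x _,
      Set.subset_inter (golombBasic_subset_golombBasic hxa (dvd_mul_right b d))
        (golombBasic_subset_golombBasic hxc (dvd_mul_left d b))⟩
  sUnion_eq := Set.eq_univ_of_forall fun x =>
    ⟨golombBasic x 1, ⟨x, 1, x.pos, one_pos, Nat.coprime_one_right _, rfl⟩,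
      self_mem_golombBasic x 1⟩
  eq_generateFrom := rfl

theorem nhds_hasBasis_golombBasic (x : ℕ+) :
    (𝓝 x).HasBasis (fun b : ℕ => b ≠ 0 ∧ (x : ℕ).Coprime b) (golombBasic x) := by
  refine isTopologicalBasis_golombBasic.nhds_hasBasis.to_hasBasis ?_ ?_
  · rintro _ ⟨⟨a, b, -, hb, hab, rfl⟩, hx⟩
    exact ⟨b, ⟨hb.ne', coprime_of_mem_golombBasic hab hx⟩,
      golombBasic_subset_golombBasic hx dvd_rfl⟩
  · rintro b ⟨hb, hxb⟩
    exact ⟨golombBasic x b, ⟨⟨x, b, x.pos, Nat.pos_of_ne_zero hb, hxb, rfl⟩,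
      self_mem_golombBasic x b⟩, subset_rfl⟩

/-- `A` is a union of residue classes modulo `q`, within the positive integers. This is all that
the argument needs to know about the subspace `ℕ \ pℕ`. -/
def IsPeriodicMod (q : ℕ) (A : Set ℕ+) : Prop :=
  ∀ ⦃a b : ℕ+⦄, (a : ℕ) ≡ b [MOD q] → a ∈ A → b ∈ A

theorem isPeriodicMod_setOf_not_dvd (q : ℕ) : IsPeriodicMod q {a : ℕ+ | ¬ q ∣ (a : ℕ)} :=
  fun _ _ hab ha hb => ha ((hab.dvd_iff dvd_rfl).mpr hb)

section Subspace

variable {q : ℕ} {A : Set ℕ+}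

theorem IsPeriodicMod.of_dvd {r : ℕ} (hA : IsPeriodicMod q A) (hqr : q ∣ r) : IsPeriodicMod r A :=
  fun _ _ hab => hA (hab.of_dvd hqr)

theorem nhds_subtype_hasBasis_golombBasic (x : A) :
    (𝓝 x).HasBasis (fun b : ℕ => b ≠ 0 ∧ ((x : ℕ+) : ℕ).Coprime b)
      (fun b => Subtype.val ⁻¹' golombBasic (x : ℕ+) b) := by
  rw [nhds_subtype]
  exact (nhds_hasBasis_golombBasic (x : ℕ+)).comap _

theorem IsPeriodicMod.mem_closure_golombBasic {u c : ℕ} (hA : IsPeriodicMod u A) (hu : u ≠ 0)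
    (hc : c ≠ 0) {x z : A} (hzx : (z : ℕ+) ≡ (x : ℕ+) [MOD u]) (hcz : c ∣ (z : ℕ+)) :
    z ∈ closure (Subtype.val ⁻¹' golombBasic (x : ℕ+) (u * c)) := by
  rw [mem_closure_iff_nhds_basis (nhds_subtype_hasBasis_golombBasic z)]
  rintro d ⟨hd, hzd⟩
  have hcop : ((u * c).gcd d).Coprime c :=
    ((hzd.coprime_dvd_left hcz).coprime_dvd_right (Nat.gcd_dvd_right _ _)).symm
  have hgcd : (u * c).gcd d ∣ u := hcop.dvd_of_dvd_mul_right (Nat.gcd_dvd_left _ _)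
  obtain ⟨w, hwx, hwz⟩ := golombBasic_inter_nonempty (mul_ne_zero hu hc) hd (hzx.symm.of_dvd hgcd)
  have hwA : w ∈ A :=
    hA ((mem_golombBasic_iff.mp hwx).2.of_dvd (dvd_mul_right u c)).symm x.2
  exact ⟨⟨w, hwA⟩, hwx, hwz⟩

theorem IsPeriodicMod.exists_forall_dvd_mem_of_isClopen (hA : IsPeriodicMod q A) (hq : q ≠ 0)
    {Ω : Set A} (hΩ : IsClopen Ω) {x : A} (hx : x ∈ Ω) :
    ∃ n c : ℕ, 0 < n ∧ c ≠ 0 ∧ q.Coprime c ∧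
      ∀ z : A, (z : ℕ+) ≡ (x : ℕ+) [MOD q ^ n] → c ∣ (z : ℕ+) → z ∈ Ω := by
  obtain ⟨b, ⟨hb, -⟩, hbΩ⟩ :=
    (nhds_subtype_hasBasis_golombBasic x).mem_iff.mp (hΩ.isOpen.mem_nhds hx)
  obtain ⟨u, c, n, rfl, hun, hqc⟩ := exists_eq_mul_dvd_pow_coprime q hb
  obtain ⟨hu, hc⟩ := mul_ne_zero_iff.mp hb
  refine ⟨n + 1, c, n.succ_pos, hc, hqc, fun z hzx hcz => ?_⟩
  -- `A` is periodic modulo `q * u`, but in general not modulo `u`.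
  have hzx' : (z : ℕ+) ≡ (x : ℕ+) [MOD q * u] :=
    hzx.of_dvd (pow_succ' q n ▸ mul_dvd_mul_left q hun)
  have hsub : Subtype.val ⁻¹' golombBasic (x : ℕ+) (q * u * c) ⊆ Ω :=
    (Set.preimage_mono (golombBasic_subset_golombBasic (self_mem_golombBasic _ _)
      (mul_dvd_mul_right (dvd_mul_left u q) c))).trans hbΩ
  exact closure_minimal hsub hΩ.isClosed <|
    (hA.of_dvd (dvd_mul_right q u)).mem_closure_golombBasic (mul_ne_zero hq hu) hc hzx' hcz

end Subspace

theorem golomb_clopen_padic_nbhd_general {q : ℕ} (hq : q ≠ 0) {A : Set ℕ+}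
    (hA : IsPeriodicMod q A) {Ω : Set A} (hΩ : IsClopen Ω) {x : A} (hx : x ∈ Ω) :
    ∃ n : ℕ, 0 < n ∧ ∀ y : A, (y : ℕ+) ≡ (x : ℕ+) [MOD q ^ n] → y ∈ Ω := by
  obtain ⟨n, c, hn, hc, hqc, hcΩ⟩ := hA.exists_forall_dvd_mem_of_isClopen hq hΩ hx
  refine ⟨n, hn, fun y hyx => ?_⟩
  by_contra hy
  obtain ⟨m, e, -, he, hqe, heΩ⟩ := hA.exists_forall_dvd_mem_of_isClopen hq hΩ.compl hy
  have hcop : (q ^ (n + m)).Coprime (c * e) := (hqc.mul_right hqe).pow_left _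
  obtain ⟨z, hzy, hz⟩ : (golombBasic (y : ℕ+) (q ^ (n + m)) ∩ golombBasic 0 (c * e)).Nonempty :=
    golombBasic_inter_nonempty (pow_ne_zero _ hq) (mul_ne_zero hc he) (hcop ▸ Nat.modEq_one)
  have hzy : (z : ℕ) ≡ (y : ℕ+) [MOD q ^ (n + m)] := (mem_golombBasic_iff.mp hzy).2
  have hz : c * e ∣ z := Nat.modEq_zero_iff_dvd.mp (mem_golombBasic_iff.mp hz).2
  have hzA : z ∈ A := hA (hzy.of_dvd (dvd_pow_self q (by lia))).symm y.2
  have hzΩ : ⟨z, hzA⟩ ∈ Ω := hcΩ ⟨z, hzA⟩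
    ((hzy.of_dvd (pow_dvd_pow q (Nat.le_add_right n m))).trans hyx) (dvd_of_mul_right_dvd hz)
  have hzΩc : ⟨z, hzA⟩ ∈ Ωᶜ := heΩ ⟨z, hzA⟩
    (hzy.of_dvd (pow_dvd_pow q (Nat.le_add_left m n))) (dvd_of_mul_left_dvd hz)
  exact hzΩc hzΩ

/-- For any clopen subset `Ω` of the subspace `ℕ_τ \ pℕ` of the Golomb space and
any `x ∈ Ω` there is `n ∈ ℕ` with `x + p^nℕ₀ ⊆ Ω`. -/
theorem golomb_clopen_padic_nbhd (p : ℕ) (hp : p.Prime) (Ω : Set (Np p))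
    (hΩ : IsClopen Ω) (x : Np p) (hx : x ∈ Ω) :
    ∃ n : ℕ, 0 < n ∧ ∀ y : Np p,
      (∃ k : ℕ, ((y : ℕ+) : ℕ) = ((x : ℕ+) : ℕ) + p ^ n * k) → y ∈ Ω := by
  obtain ⟨n, hn, h⟩ :=
    golomb_clopen_padic_nbhd_general hp.ne_zero (isPeriodicMod_setOf_not_dvd p) hΩ hx
  exact ⟨n, hn, fun y hy => h y (mem_golombBasic_iff.mp hy).2⟩
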